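/- Let ν > 0, T > 0, let u : ℝ³ × [0,T] → ℝ³ be C^∞ with u and ∇u bounded, and let A : ℝ³ × [0,T] → ℝ³ be a C^∞ solution of ∂A/∂t + (u·∇)A − νΔA = 0 with A(x,0) = x whose second spatial derivatives are bounded on ℝ³ × [0,T]. Suppose Q : ℝ³ × [0,T] → M₃(ℝ) is C^∞, bounded together with its spatial gradient ∇Q, satisfies Q(x,0) = I, and solves ∂Q/∂t + (u·∇)Q − νΔQ = (∇u)Q + 2ν Σ_{k=1}^{3} Q (∂_k ∇A)(∂_k Q) on ℝ³ × (0,T), where (∇u)_{ij} = ∂u_i/∂x_j, (∇A)_{ij} = ∂A_i/∂x_j, and products are matrix products. Then ∇A(x,t) Q(x,t) = I for all (x,t) ∈ ℝ³ × [0,T]; that is, Q is pointwise the inverse of the Jacobian matrix ∇A. -/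

import Mathlib

open Set Filter

noncomputable section

/-- Spatial partial derivative in the `j`-th coordinate direction. -/
def pd (j : Fin 3) (φ : (Fin 3 → ℝ) → ℝ) (x : Fin 3 → ℝ) : ℝ :=
  fderiv ℝ φ x (Pi.single j 1)

/-- Spatial Laplacian. -/
def lap (φ : (Fin 3 → ℝ) → ℝ) (x : Fin 3 → ℝ) : ℝ :=
  ∑ j, pd j (fun y => pd j φ y) x

/-- Spatial Jacobian matrix of a map `ℝ³ → ℝ³`: entries `∂fᵢ/∂xⱼ`. -/
def jacMat (f : (Fin 3 → ℝ) → (Fin 3 → ℝ)) (x : Fin 3 → ℝ) :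
    Matrix (Fin 3) (Fin 3) ℝ :=
  fun i j => pd j (fun y => f y i) x

/-!
Let `M = ∇A`. Differentiating `ΓA = 0` gives `ΓM = -M∇u`, as `∂ⱼ` commutes with `Γ` up to the
derivative of the drift. By the product rule for `Γ`, the deviation `Z = MQ - I` then solves the
*linear* equation `ΓZ = Z · 2ν ∑ₖ (∂ₖM)(∂ₖQ)` with bounded coefficient and `Z = 0` at time `0`. As
`M` and `Q` have bounded gradients, `Z` grows at most quadratically in `x`, and is compared with
`e^{ct} (1 + ∑ᵢ xᵢᴺ)` for large `N` and `c`: a maximum principle for `‖Z‖ / V`, reduced to scalar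
functions by norming functionals, forces `Z = 0`.
-/

open Topology Asymptotics

section DirectionalDerivative

variable {X H H' 𝔸 : Type*} [NormedAddCommGroup X] [NormedSpace ℝ X] [NormedAddCommGroup H]
  [NormedSpace ℝ H] [NormedAddCommGroup H'] [NormedSpace ℝ H'] [NormedRing 𝔸] [NormedAlgebra ℝ 𝔸]
  {F G : X → H} {q : X}

/-- The directional derivative `∂ᵥF` at `q`. It is read off the Fréchet derivative, so that it is
linear in `v` even where `F` fails to be differentiable. -/
def dirDeriv (v : X) (F : X → H) (q : X) : H := fderiv ℝ F q v

theorem dirDeriv_sub (hF : DifferentiableAt ℝ F q) (hG : DifferentiableAt ℝ G q) (v : X) :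
    dirDeriv v (fun p => F p - G p) q = dirDeriv v F q - dirDeriv v G q := by
  simp [dirDeriv, fderiv_fun_sub hF hG]

theorem dirDeriv_sum {κ : Type*} {s : Finset κ} {F : κ → X → H}
    (hF : ∀ i ∈ s, DifferentiableAt ℝ (F i) q) (v : X) :
    dirDeriv v (fun p => ∑ i ∈ s, F i p) q = ∑ i ∈ s, dirDeriv v (F i) q := by
  simp [dirDeriv, fderiv_fun_sum hF]

theorem dirDeriv_mul {F G : X → 𝔸} (hF : DifferentiableAt ℝ F q) (hG : DifferentiableAt ℝ G q)
    (v : X) : dirDeriv v (fun p => F p * G p) q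
      = dirDeriv v F q * G q + F q * dirDeriv v G q := by
  simp [dirDeriv, fderiv_fun_mul' hF hG, add_comm]

theorem dirDeriv_clm_comp (L : H →L[ℝ] H') (hF : DifferentiableAt ℝ F q) (v : X) :
    dirDeriv v (fun p => L (F p)) q = L (dirDeriv v F q) := by
  have h := L.hasFDerivAt.comp q hF.hasFDerivAt
  rw [dirDeriv, show (fun p => L (F p)) = L ∘ F from rfl, h.fderiv]
  rfl

theorem dirDeriv_comp_clm {φ : ℝ → ℝ} (ℓ : X →L[ℝ] ℝ) (hφ : DifferentiableAt ℝ φ (ℓ q)) (v : X) :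
    dirDeriv v (fun p => φ (ℓ p)) q = deriv φ (ℓ q) * ℓ v := by
  have h := hφ.hasFDerivAt.comp q ℓ.hasFDerivAt
  rw [dirDeriv, show (fun p => φ (ℓ p)) = φ ∘ ℓ from rfl, h.fderiv]
  simp [mul_comm]

theorem dirDeriv_congr (h : F =ᶠ[𝓝 q] G) (v : X) : dirDeriv v F q = dirDeriv v G q := by
  rw [dirDeriv, dirDeriv, h.fderiv_eq]

theorem contDiffAt_dirDeriv {m n : WithTop ℕ∞} (hF : ContDiffAt ℝ n F q) (hmn : m + 1 ≤ n)
    (v : X) : ContDiffAt ℝ m (dirDeriv v F) q :=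
  (hF.fderiv_right hmn).clm_apply contDiffAt_const

theorem differentiableAt_dirDeriv (hF : ContDiffAt ℝ 2 F q) (v : X) :
    DifferentiableAt ℝ (dirDeriv v F) q :=
  (contDiffAt_dirDeriv hF one_add_one_eq_two.le v).differentiableAt one_ne_zero

theorem eventually_differentiableAt_of_contDiffAt (hF : ContDiffAt ℝ 2 F q) :
    ∀ᶠ p in 𝓝 q, DifferentiableAt ℝ F p :=
  (hF.eventually (by simp)).mono fun _ hp => hp.differentiableAt two_ne_zero

theorem dirDeriv_dirDeriv (hF : ContDiffAt ℝ 2 F q) (v w : X) :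
    dirDeriv v (dirDeriv w F) q = fderiv ℝ (fderiv ℝ F) q v w := by
  have hd : DifferentiableAt ℝ (fderiv ℝ F) q :=
    (hF.fderiv_right one_add_one_eq_two.le).differentiableAt one_ne_zero
  have h := hd.hasFDerivAt.clm_apply (hasFDerivAt_const w q)
  rw [dirDeriv, show dirDeriv w F = fun p => fderiv ℝ F p w from rfl, h.fderiv]
  simp

theorem dirDeriv_comm (hF : ContDiffAt ℝ 2 F q) (v w : X) :
    dirDeriv v (dirDeriv w F) q = dirDeriv w (dirDeriv v F) q := by
  rw [dirDeriv_dirDeriv hF, dirDeriv_dirDeriv hF]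
  exact hF.isSymmSndFDerivAt (by simp) v w

theorem dirDeriv_dirDeriv_sub (hF : ContDiffAt ℝ 2 F q) (hG : ContDiffAt ℝ 2 G q) (v : X) :
    dirDeriv v (dirDeriv v fun p => F p - G p) q
      = dirDeriv v (dirDeriv v F) q - dirDeriv v (dirDeriv v G) q := by
  rw [← dirDeriv_sub (differentiableAt_dirDeriv hF v) (differentiableAt_dirDeriv hG v)]
  refine dirDeriv_congr ?_ v
  filter_upwards [eventually_differentiableAt_of_contDiffAt hF,
    eventually_differentiableAt_of_contDiffAt hG] with p hFp hGp using dirDeriv_sub hFp hGp v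

theorem dirDeriv_dirDeriv_sum {κ : Type*} {s : Finset κ} {F : κ → X → H}
    (hF : ∀ i ∈ s, ContDiffAt ℝ 2 (F i) q) (v : X) :
    dirDeriv v (dirDeriv v fun p => ∑ i ∈ s, F i p) q
      = ∑ i ∈ s, dirDeriv v (dirDeriv v (F i)) q := by
  rw [← dirDeriv_sum fun i hi => differentiableAt_dirDeriv (hF i hi) v]
  refine dirDeriv_congr ?_ v
  filter_upwards [(Filter.eventually_all_finset s).2 fun i hi =>
    eventually_differentiableAt_of_contDiffAt (hF i hi)] with p hp using dirDeriv_sum hp v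

theorem dirDeriv_dirDeriv_mul {F G : X → 𝔸} (hF : ContDiffAt ℝ 2 F q) (hG : ContDiffAt ℝ 2 G q)
    (v : X) : dirDeriv v (dirDeriv v fun p => F p * G p) q
      = dirDeriv v (dirDeriv v F) q * G q + F q * dirDeriv v (dirDeriv v G) q
        + (2 : ℝ) • (dirDeriv v F q * dirDeriv v G q) := by
  have hF₁ := hF.differentiableAt two_ne_zero
  have hG₁ := hG.differentiableAt two_ne_zero
  have hF₂ := differentiableAt_dirDeriv hF v
  have hG₂ := differentiableAt_dirDeriv hG v
  have hmul : dirDeriv v (fun p => F p * G p)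
      =ᶠ[𝓝 q] fun p => dirDeriv v F p * G p - -(F p * dirDeriv v G p) := by
    filter_upwards [eventually_differentiableAt_of_contDiffAt hF,
      eventually_differentiableAt_of_contDiffAt hG] with p hFp hGp
    rw [dirDeriv_mul hFp hGp, sub_neg_eq_add]
  have hneg : dirDeriv v (fun p => -(F p * dirDeriv v G p)) q
      = -dirDeriv v (fun p => F p * dirDeriv v G p) q := by
    simp [dirDeriv, fderiv_fun_neg]
  rw [dirDeriv_congr hmul, dirDeriv_sub (hF₂.fun_mul hG₁) (hF₁.fun_mul hG₂).fun_neg, hneg,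
    dirDeriv_mul hF₂ hG₁, dirDeriv_mul hF₁ hG₂, two_smul]
  abel

theorem dirDeriv_dirDeriv_clm_comp (L : H →L[ℝ] H') (hF : ContDiffAt ℝ 2 F q) (v : X) :
    dirDeriv v (dirDeriv v fun p => L (F p)) q = L (dirDeriv v (dirDeriv v F) q) := by
  rw [← dirDeriv_clm_comp L (differentiableAt_dirDeriv hF v)]
  refine dirDeriv_congr ?_ v
  filter_upwards [eventually_differentiableAt_of_contDiffAt hF] with p hp
    using dirDeriv_clm_comp L hp v

theorem dirDeriv_dirDeriv_comp_clm {φ : ℝ → ℝ} (ℓ : X →L[ℝ] ℝ) (hφ : ContDiff ℝ 2 φ) (v : X) :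
    dirDeriv v (dirDeriv v fun p => φ (ℓ p)) q = deriv (deriv φ) (ℓ q) * ℓ v ^ 2 := by
  have hφ' : Differentiable ℝ (deriv φ) := (hφ.deriv' (n := 1)).differentiable one_ne_zero
  have hfirst : dirDeriv v (fun p => φ (ℓ p)) = fun p => deriv φ (ℓ p) * ℓ v :=
    funext fun p => dirDeriv_comp_clm ℓ (hφ.differentiable two_ne_zero _) v
  have hcomp : DifferentiableAt ℝ (fun p => deriv φ (ℓ p)) q :=
    (hφ' _).comp q ℓ.differentiableAt
  have hconst : dirDeriv v (fun _ : X => ℓ v) q = 0 := by simp [dirDeriv]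
  rw [hfirst, dirDeriv_mul hcomp (differentiableAt_const _), dirDeriv_comp_clm ℓ (hφ' _), hconst]
  ring

end DirectionalDerivative

section AdvectionDiffusion

variable {X H H' 𝔸 ι : Type*} [NormedAddCommGroup X] [NormedSpace ℝ X] [NormedAddCommGroup H]
  [NormedSpace ℝ H] [NormedAddCommGroup H'] [NormedSpace ℝ H'] [NormedRing 𝔸] [NormedAlgebra ℝ 𝔸]
  [Fintype ι] {ν : ℝ} {e : ι → X} {v : X → X} {F G : X → H} {q : X}

/-- The operator `∂ᵥ - ν ∑ₖ ∂_{eₖ}²`, for a drift field `v` and directions of diffusion `eₖ`.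
On space-time `ℝⁿ × ℝ`, with `v = (u, 1)` and `eₖ` the spatial unit vectors, it is the parabolic
operator `Γ = ∂ₜ + u·∇ - νΔ`; the time derivative is part of the drift. -/
def advectionDiffusion (ν : ℝ) (e : ι → X) (v : X → X) (F : X → H) (q : X) : H :=
  dirDeriv (v q) F q - ν • ∑ k, dirDeriv (e k) (dirDeriv (e k) F) q

theorem advectionDiffusion_congr (h : F =ᶠ[𝓝 q] G) :
    advectionDiffusion ν e v F q = advectionDiffusion ν e v G q := by
  have hdir : ∀ w, dirDeriv w F =ᶠ[𝓝 q] dirDeriv w G := fun w =>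
    h.eventuallyEq_nhds.mono fun _ hp => dirDeriv_congr hp w
  simp only [advectionDiffusion, dirDeriv_congr h, dirDeriv_congr (hdir _)]

theorem advectionDiffusion_sub (hF : ContDiffAt ℝ 2 F q) (hG : ContDiffAt ℝ 2 G q) :
    advectionDiffusion ν e v (fun p => F p - G p) q
      = advectionDiffusion ν e v F q - advectionDiffusion ν e v G q := by
  simp only [advectionDiffusion, dirDeriv_dirDeriv_sub hF hG, Finset.sum_sub_distrib, smul_sub,
    dirDeriv_sub (hF.differentiableAt two_ne_zero) (hG.differentiableAt two_ne_zero)]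
  abel

theorem advectionDiffusion_add_const (c : H) :
    advectionDiffusion ν e v (fun p => F p + c) q = advectionDiffusion ν e v F q := by
  have hdir : ∀ w, dirDeriv w (fun p => F p + c) = dirDeriv w F := fun w =>
    funext fun p => by simp [dirDeriv, fderiv_add_const]
  simp only [advectionDiffusion, hdir]

theorem advectionDiffusion_sum {κ : Type*} {s : Finset κ} {F : κ → X → H}
    (hF : ∀ i ∈ s, ContDiffAt ℝ 2 (F i) q) :
    advectionDiffusion ν e v (fun p => ∑ i ∈ s, F i p) q
      = ∑ i ∈ s, advectionDiffusion ν e v (F i) q := by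
  simp only [advectionDiffusion, dirDeriv_dirDeriv_sum hF, Finset.sum_sub_distrib,
    dirDeriv_sum fun i hi => (hF i hi).differentiableAt two_ne_zero, ← Finset.smul_sum]
  rw [Finset.sum_comm]

theorem advectionDiffusion_mul {F G : X → 𝔸} (hF : ContDiffAt ℝ 2 F q)
    (hG : ContDiffAt ℝ 2 G q) :
    advectionDiffusion ν e v (fun p => F p * G p) q
      = advectionDiffusion ν e v F q * G q + F q * advectionDiffusion ν e v G q
        - (2 * ν) • ∑ k, dirDeriv (e k) F q * dirDeriv (e k) G q := by
  simp only [advectionDiffusion, dirDeriv_dirDeriv_mul hF hG, Finset.sum_add_distrib,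
    dirDeriv_mul (hF.differentiableAt two_ne_zero) (hG.differentiableAt two_ne_zero),
    ← Finset.sum_mul, ← Finset.mul_sum, ← Finset.smul_sum, sub_mul, mul_sub, smul_add,
    smul_mul_assoc, mul_smul_comm, smul_smul, mul_comm ν 2]
  abel

theorem advectionDiffusion_clm_comp (L : H →L[ℝ] H') (hF : ContDiffAt ℝ 2 F q) :
    advectionDiffusion ν e v (fun p => L (F p)) q = L (advectionDiffusion ν e v F q) := by
  simp only [advectionDiffusion, dirDeriv_clm_comp L (hF.differentiableAt two_ne_zero),
    dirDeriv_dirDeriv_clm_comp L hF, map_sub, map_smul, map_sum]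

theorem advectionDiffusion_comp_clm {φ : ℝ → ℝ} (ℓ : X →L[ℝ] ℝ) (hφ : ContDiff ℝ 2 φ) :
    advectionDiffusion ν e v (fun p => φ (ℓ p)) q
      = deriv φ (ℓ q) * ℓ (v q) - ν * (deriv (deriv φ) (ℓ q) * ∑ k, ℓ (e k) ^ 2) := by
  simp only [advectionDiffusion, dirDeriv_dirDeriv_comp_clm ℓ hφ, Finset.mul_sum, smul_eq_mul,
    dirDeriv_comp_clm ℓ (hφ.differentiable two_ne_zero _)]

/-- The commutator of `∂_w` with the operator only sees the drift: `[∂_w, L] = ∂_{∂_w v}`. -/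
theorem dirDeriv_advectionDiffusion (hF : ContDiffAt ℝ 3 F q) (hv : DifferentiableAt ℝ v q)
    (w : X) : dirDeriv w (advectionDiffusion ν e v F) q
      = advectionDiffusion ν e v (dirDeriv w F) q + dirDeriv (dirDeriv w v q) F q := by
  have hF₂ : ContDiffAt ℝ 2 F q := hF.of_le (by norm_num)
  have hdir : ∀ a, ContDiffAt ℝ 2 (dirDeriv a F) q :=
    fun a => contDiffAt_dirDeriv hF (by norm_num) a
  have hcomm : ∀ a, dirDeriv w (dirDeriv a (dirDeriv a F)) q
      = dirDeriv a (dirDeriv a (dirDeriv w F)) q := fun a => by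
    rw [dirDeriv_comm (hdir a)]
    exact dirDeriv_congr ((hF₂.eventually (by simp)).mono fun p hp => dirDeriv_comm hp w a) a
  have hdrift : HasFDerivAt (fun p => dirDeriv (v p) F p) _ q :=
    ((hF₂.fderiv_right (m := 1) one_add_one_eq_two.le).differentiableAt
      one_ne_zero).hasFDerivAt.clm_apply hv.hasFDerivAt
  have hdiff : ∀ k, DifferentiableAt ℝ (dirDeriv (e k) (dirDeriv (e k) F)) q :=
    fun k => differentiableAt_dirDeriv (hdir (e k)) (e k)
  have hlap : DifferentiableAt ℝ (fun p => ∑ k, dirDeriv (e k) (dirDeriv (e k) F) p) q :=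
    DifferentiableAt.fun_sum fun k _ => hdiff k
  have hsmul : dirDeriv w (fun p => ν • ∑ k, dirDeriv (e k) (dirDeriv (e k) F) p) q
      = ν • ∑ k, dirDeriv (e k) (dirDeriv (e k) (dirDeriv w F)) q := by
    rw [← Finset.sum_congr rfl fun k _ => hcomm (e k), ← dirDeriv_sum fun k _ => hdiff k]
    exact dirDeriv_clm_comp (ν • ContinuousLinearMap.id ℝ H) hlap w
  have hfirst : dirDeriv w (fun p => dirDeriv (v p) F p) q
      = dirDeriv (v q) (dirDeriv w F) q + dirDeriv (dirDeriv w v q) F q := by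
    rw [dirDeriv_comm hF₂, dirDeriv_dirDeriv hF₂, dirDeriv, hdrift.fderiv]
    simp [dirDeriv, add_comm]
  change dirDeriv w (fun p => dirDeriv (v p) F p
    - ν • ∑ k, dirDeriv (e k) (dirDeriv (e k) F) p) q = _
  rw [dirDeriv_sub hdrift.differentiableAt (hlap.fun_const_smul ν), hfirst, hsmul,
    advectionDiffusion]
  abel

theorem advectionDiffusion_mul_sub_one {M Q : X → 𝔸} {U : 𝔸} (hM : ContDiffAt ℝ 2 M q)
    (hQ : ContDiffAt ℝ 2 Q q) (hLM : advectionDiffusion ν e v M q = -(M q * U))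
    (hLQ : advectionDiffusion ν e v Q q
      = U * Q q + (2 * ν) • ∑ k, Q q * dirDeriv (e k) M q * dirDeriv (e k) Q q) :
    advectionDiffusion ν e v (fun p => M p * Q p - 1) q
      = (M q * Q q - 1) * (2 * ν) • ∑ k, dirDeriv (e k) M q * dirDeriv (e k) Q q := by
  have hfactor : ∑ k, Q q * dirDeriv (e k) M q * dirDeriv (e k) Q q
      = Q q * ∑ k, dirDeriv (e k) M q * dirDeriv (e k) Q q := by
    simp only [Finset.mul_sum, mul_assoc]
  rw [hfactor] at hLQ
  simp only [sub_eq_add_neg, advectionDiffusion_add_const, advectionDiffusion_mul hM hQ, hLM, hLQ,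
    add_mul, mul_add, neg_mul, one_mul, mul_smul_comm, smul_add, smul_neg, mul_assoc]
  abel

theorem deriv_deriv_nonpos_of_isLocalMax {g : ℝ → ℝ} {s : ℝ} (h : IsLocalMax g s)
    (hg : ContinuousAt g s) : deriv (deriv g) s ≤ 0 := by
  by_contra! hpos
  have hmin : IsLocalMin g s := isLocalMin_of_deriv_deriv_pos hpos h.deriv_eq_zero hg
  have hconst : g =ᶠ[𝓝 s] fun _ => g s := by
    filter_upwards [h, hmin] with r hr hr' using le_antisymm hr hr'
  have hzero : deriv (deriv g) s = 0 := by simp [hconst.deriv.deriv_eq]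
  exact hpos.ne' hzero

theorem dirDeriv_dirDeriv_nonpos_of_isLocalMaxOn {f : X → ℝ} {S : Set X} {w : X}
    (hf : ContDiffAt ℝ 2 f q) (hmax : IsLocalMaxOn f S q)
    (hw : ∀ᶠ s : ℝ in 𝓝 0, q + s • w ∈ S) : dirDeriv w (dirDeriv w f) q ≤ 0 := by
  have hline : ∀ s : ℝ, HasDerivAt (fun s : ℝ => q + s • w) w s := fun s => by
    simpa using ((hasDerivAt_id s).smul_const w).const_add q
  have htendsto : Tendsto (fun s : ℝ => q + s • w) (𝓝 0) (𝓝 q) := by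
    simpa using (hline 0).continuousAt.tendsto
  have hderiv : deriv (fun s : ℝ => f (q + s • w)) =ᶠ[𝓝 0] fun s => dirDeriv w f (q + s • w) :=
    (htendsto.eventually (eventually_differentiableAt_of_contDiffAt hf)).mono fun s hs =>
      (hs.hasFDerivAt.comp_hasDerivAt s (hline s)).deriv
  have hdir : DifferentiableAt ℝ (dirDeriv w f) (q + (0 : ℝ) • w) := by
    simpa using differentiableAt_dirDeriv hf w
  have hlocal : IsLocalMax (fun s : ℝ => f (q + s • w)) 0 := by
    have := (tendsto_nhdsWithin_iff.2 ⟨htendsto, hw⟩).eventually hmax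
    simpa [IsLocalMax, IsMaxFilter] using this
  have hcont : ContinuousAt (fun s : ℝ => f (q + s • w)) 0 :=
    ContinuousAt.comp (by simpa using hf.continuousAt) (hline 0).continuousAt
  have hsecond : deriv (fun s : ℝ => dirDeriv w f (q + s • w)) 0
      = dirDeriv w (dirDeriv w f) (q + (0 : ℝ) • w) :=
    (hdir.hasFDerivAt.comp_hasDerivAt (0 : ℝ) (hline 0) :).deriv
  have h := deriv_deriv_nonpos_of_isLocalMax hlocal hcont
  rwa [hderiv.deriv_eq, hsecond, zero_smul, add_zero] at h

theorem advectionDiffusion_nonneg_of_isLocalMaxOn {f : X → ℝ} {S : Set X} (hν : 0 ≤ ν)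
    (hf : ContDiffAt ℝ 2 f q) (hmax : IsLocalMaxOn f S q)
    (hv : ∀ᶠ s : ℝ in 𝓝[>] 0, q - s • v q ∈ S)
    (he : ∀ k, ∀ᶠ s : ℝ in 𝓝 0, q + s • e k ∈ S) : 0 ≤ advectionDiffusion ν e v f q := by
  have hdrift : 0 ≤ dirDeriv (v q) f q := by
    have hcone : -v q ∈ posTangentConeAt S q :=
      mem_posTangentConeAt_of_frequently_mem
        (hv.mono fun s hs => by simpa [sub_eq_add_neg] using hs).frequently
    simpa [dirDeriv] using hmax.hasFDerivWithinAt_nonpos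
      (hf.differentiableAt two_ne_zero).hasFDerivAt.hasFDerivWithinAt hcone
  have hdiffusion : ∑ k, dirDeriv (e k) (dirDeriv (e k) f) q ≤ 0 :=
    Finset.sum_nonpos fun k _ => dirDeriv_dirDeriv_nonpos_of_isLocalMaxOn hf hmax (he k)
  exact sub_nonneg.2 ((mul_nonpos_of_nonneg_of_nonpos hν hdiffusion).trans hdrift)

/-- A norming functional `ℓ` at `q` reduces the vector-valued `Z` to a scalar function:
`ℓ ∘ Z - εV`, with `ε` the maximum of `‖Z‖ / V`, has a maximum at `q`. -/
theorem eq_zero_of_isMaxOn_norm_div {Z : X → H} {V : X → ℝ} {S : Set X} {K : ℝ} (hν : 0 ≤ ν)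
    (hZ : ContDiffAt ℝ 2 Z q) (hV : ContDiffAt ℝ 2 V q) (hVpos : ∀ p ∈ S, 0 < V p) (hq : q ∈ S)
    (hmax : IsMaxOn (fun p => ‖Z p‖ / V p) S q)
    (hv : ∀ᶠ s : ℝ in 𝓝[>] 0, q - s • v q ∈ S) (he : ∀ k, ∀ᶠ s : ℝ in 𝓝 0, q + s • e k ∈ S)
    (hLZ : ‖advectionDiffusion ν e v Z q‖ ≤ K * ‖Z q‖)
    (hLV : K * V q < advectionDiffusion ν e v V q) : Z q = 0 := by
  by_contra hne
  obtain ⟨ℓ, hℓ, hℓZ⟩ := exists_dual_vector'' ℝ (Z q)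
  have hℓ_le : ∀ y, ℓ y ≤ ‖y‖ := fun y =>
    (le_abs_self _).trans ((ℓ.le_of_opNorm_le hℓ y).trans_eq (one_mul _))
  set ε := ‖Z q‖ / V q
  have hεpos : 0 < ε := div_pos (norm_pos_iff.2 hne) (hVpos q hq)
  have hεV : ε * V q = ‖Z q‖ := div_mul_cancel₀ _ (hVpos q hq).ne'
  have htouch : IsMaxOn (fun p => ℓ (Z p) - ε * V p) S q := fun p hp => by
    have hle : ‖Z p‖ ≤ ε * V p := (div_le_iff₀ (hVpos p hp)).1 (hmax hp)
    have hzero : ℓ (Z q) - ε * V q = 0 := by rw [hℓZ, hεV]; exact sub_self _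
    simpa [hzero] using (hℓ_le (Z p)).trans hle
  have hℓC : ContDiffAt ℝ 2 (fun p => ℓ (Z p)) q := ℓ.contDiff.contDiffAt.comp q hZ
  have hVC : ContDiffAt ℝ 2 (fun p => ε * V p) q := contDiffAt_const.mul hV
  have hLεV : advectionDiffusion ν e v (fun p => ε * V p) q = ε * advectionDiffusion ν e v V q :=
    advectionDiffusion_clm_comp (ContinuousLinearMap.mul ℝ ℝ ε) hV
  have hnonneg := advectionDiffusion_nonneg_of_isLocalMaxOn hν (hℓC.sub hVC) htouch.localize hv he
  rw [advectionDiffusion_sub hℓC hVC, advectionDiffusion_clm_comp ℓ hZ, hLεV] at hnonneg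
  have hupper := (hℓ_le _).trans hLZ
  have hlower := mul_lt_mul_of_pos_left hLV hεpos
  rw [mul_left_comm, hεV] at hlower
  linarith

end AdvectionDiffusion

section SpaceTime

variable {E H ι : Type*} [NormedAddCommGroup E] [NormedSpace ℝ E] [NormedAddCommGroup H]
  [NormedSpace ℝ H] [Fintype ι] {ν T : ℝ} {a : ι → E} {u : E × ℝ → E}

/-- The parabolic operator `∂ₜ + u·∇ - ν ∑ₖ ∂_{aₖ}²` on functions of space and time. -/
abbrev parabolicOp (ν : ℝ) (a : ι → E) (u : E × ℝ → E) : (E × ℝ → H) → E × ℝ → H :=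
  advectionDiffusion ν (fun k => (a k, 0)) fun q => (u q, 1)

/-- The Lyapunov function `V` controls `Z` at infinity and outgrows it in time, so that `‖Z‖ / V`
can have no positive maximum. -/
theorem eqOn_zero_of_lyapunov {Z : E × ℝ → H} {V : E × ℝ → ℝ} {K : ℝ} (hν : 0 ≤ ν) (hT : 0 < T)
    (hZ : ContinuousOn Z (univ ×ˢ Icc 0 T)) (hV : ContinuousOn V (univ ×ˢ Icc 0 T))
    (hZ₂ : ∀ q ∈ univ ×ˢ Ioo 0 T, ContDiffAt ℝ 2 Z q)
    (hV₂ : ∀ q ∈ univ ×ˢ Ioo 0 T, ContDiffAt ℝ 2 V q)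
    (hVpos : ∀ q ∈ univ ×ˢ Icc 0 T, 0 < V q)
    (hZV : Z =o[cocompact (E × ℝ) ⊓ 𝓟 (univ ×ˢ Icc 0 T)] V) (hZ₀ : ∀ x, Z (x, 0) = 0)
    (hLZ : ∀ q ∈ univ ×ˢ Ioo 0 T, ‖parabolicOp ν a u Z q‖ ≤ K * ‖Z q‖)
    (hLV : ∀ q ∈ univ ×ˢ Ioo 0 T, K * V q < parabolicOp ν a u V q) :
    EqOn Z 0 (univ ×ˢ Icc 0 T) := by
  suffices hopen : EqOn Z 0 (univ ×ˢ Ico 0 T) by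
    refine hopen.of_subset_closure hZ continuousOn_const (prod_mono_right Ico_subset_Icc_self) ?_
    rw [closure_prod_eq, closure_univ, closure_Ico hT.ne]
  rintro ⟨x, t⟩ ⟨-, ht⟩
  by_contra hne
  have hsub : (univ : Set E) ×ˢ Icc 0 t ⊆ univ ×ˢ Icc 0 T :=
    prod_mono_right (Icc_subset_Icc_right ht.2.le)
  have hmem : (x, t) ∈ (univ : Set E) ×ˢ Icc 0 t := ⟨trivial, ht.1, le_rfl⟩
  have hratio : 0 < ‖Z (x, t)‖ / V (x, t) := div_pos (norm_pos_iff.2 hne) (hVpos _ (hsub hmem))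
  have hinfty : ∀ᶠ p in cocompact (E × ℝ) ⊓ 𝓟 (univ ×ˢ Icc 0 t),
      ‖Z p‖ / V p ≤ ‖Z (x, t)‖ / V (x, t) := by
    have hle := (hZV.mono (inf_le_inf_left _ (principal_mono.2 hsub))).bound hratio
    filter_upwards [hle, mem_inf_of_right (mem_principal_self _)] with p hp hpS
    have hVp := hVpos p (hsub hpS)
    rwa [Real.norm_of_nonneg hVp.le, ← div_le_iff₀ hVp] at hp
  obtain ⟨⟨y, s⟩, ⟨-, hs⟩, hmax⟩ :=
    ((hZ.mono hsub).norm.div (hV.mono hsub) fun p hp => (hVpos p (hsub hp)).ne').exists_isMaxOn'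
      (isClosed_univ.prod isClosed_Icc) hmem hinfty
  have hZy : Z (y, s) ≠ 0 := fun h => by simpa [h] using hratio.trans_le (hmax hmem)
  have hspos : 0 < s := hs.1.lt_of_ne' fun h : s = 0 => hZy (h ▸ hZ₀ y)
  have hinner : (y, s) ∈ (univ : Set E) ×ˢ Ioo 0 T := ⟨trivial, hspos, hs.2.trans_lt ht.2⟩
  refine hZy (eq_zero_of_isMaxOn_norm_div hν (hZ₂ _ hinner) (hV₂ _ hinner)
    (fun p hp => hVpos p (hsub hp)) ⟨trivial, hs⟩ hmax ?_ ?_ (hLZ _ hinner) (hLV _ hinner))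
  · filter_upwards [Ioo_mem_nhdsGT hspos] with r hr
    simpa using ⟨hr.2.le, by linarith [hr.1, hs.2]⟩
  · simpa using fun _ => hs

theorem parabolicOp_exp_mul (c : ℝ) {P : E → ℝ} (hP : ContDiff ℝ 2 P) {q : E × ℝ} :
    parabolicOp ν a u (fun p => Real.exp (c * p.2) * P p.1) q
      = Real.exp (c * q.2) * (c * P q.1 + parabolicOp ν a u (fun p => P p.1) q) := by
  have hderiv : deriv (fun s => Real.exp (c * s)) q.2 = c * Real.exp (c * q.2) := by
    simpa [mul_comm] using ((hasDerivAt_id q.2).const_mul c).exp.deriv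
  have hexp : ∀ w, dirDeriv w (fun p : E × ℝ => Real.exp (c * p.2)) q
      = c * Real.exp (c * q.2) * w.2 := fun w => by
    rw [← hderiv]
    exact dirDeriv_comp_clm (φ := fun s => Real.exp (c * s)) (.snd ℝ E ℝ) (by fun_prop) w
  have hLexp : parabolicOp ν a u (fun p => Real.exp (c * p.2)) q = c * Real.exp (c * q.2) := by
    have h := advectionDiffusion_comp_clm (ν := ν) (e := fun k => (a k, 0))
      (v := fun q => (u q, 1)) (q := q) (φ := fun s => Real.exp (c * s)) (.snd ℝ E ℝ) (by fun_prop)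
    simpa [hderiv] using h
  rw [parabolicOp, advectionDiffusion_mul (by fun_prop) (by fun_prop)]
  simp only [hLexp, hexp]
  simp
  ring

end SpaceTime

section Barrier

variable {ι : Type*} [Fintype ι] {ν C : ℝ} {N m : ℕ}

/-- The barrier `1 + ∑ᵢ xᵢᴺ`, meant for even `N`. -/
def polyBarrier (N : ℕ) (x : ι → ℝ) : ℝ := ∑ i, x i ^ N + 1

theorem one_le_polyBarrier (hN : Even N) (x : ι → ℝ) : 1 ≤ polyBarrier N x :=
  le_add_of_nonneg_left (Finset.sum_nonneg fun i _ => hN.pow_nonneg (x i))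

theorem norm_pow_le_polyBarrier (hN : Even N) (hmN : m ≤ N) (x : ι → ℝ) :
    ‖x‖ ^ m ≤ polyBarrier N x := by
  rcases le_total ‖x‖ 1 with hx | hx
  · exact (pow_le_one₀ (norm_nonneg x) hx).trans (one_le_polyBarrier hN x)
  · obtain ⟨i, hi⟩ : ∃ i, ‖x‖ ≤ ‖x i‖ := by
      by_contra! hlt
      exact lt_irrefl _ ((pi_norm_lt_iff (by linarith)).2 hlt)
    calc ‖x‖ ^ m ≤ ‖x‖ ^ N := pow_le_pow_right₀ hx hmN
      _ ≤ ‖x i‖ ^ N := pow_le_pow_left₀ (norm_nonneg x) hi N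
      _ = x i ^ N := hN.pow_abs (x i)
      _ ≤ ∑ j, x j ^ N := Finset.single_le_sum (fun j _ => hN.pow_nonneg (x j)) (Finset.mem_univ i)
      _ ≤ polyBarrier N x := (lt_add_one _).le

theorem contDiff_polyBarrier {n : WithTop ℕ∞} : ContDiff ℝ n (polyBarrier (ι := ι) N) := by
  unfold polyBarrier
  fun_prop

theorem isLittleO_one_add_norm_pow_polyBarrier (m : ℕ) (T : ℝ) :
    (fun q : (ι → ℝ) × ℝ => (1 + ‖q.1‖) ^ m)
      =o[cocompact _ ⊓ 𝓟 (univ ×ˢ Icc 0 T)] fun q => polyBarrier (2 * m + 2) q.1 := by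
  have hN : Even (2 * m + 2) := ⟨m + 1, by ring⟩
  have htendsto : Tendsto (fun q : (ι → ℝ) × ℝ => 1 + ‖q.1‖)
      (cocompact _ ⊓ 𝓟 (univ ×ˢ Icc 0 T)) atTop := by
    have hnorm : Tendsto (fun q : (ι → ℝ) × ℝ => ‖q‖ - T)
        (cocompact _ ⊓ 𝓟 (univ ×ˢ Icc 0 T)) atTop :=
      (tendsto_atTop_add_const_right _ (-T) tendsto_norm_cocompact_atTop).mono_left inf_le_left
    refine tendsto_atTop_mono' _ ?_ hnorm
    filter_upwards [mem_inf_of_right (mem_principal_self _)] with q hq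
    have hq₂ : ‖q.2‖ ≤ T := (Real.norm_of_nonneg hq.2.1).trans_le hq.2.2
    have := max_le_add_of_nonneg (norm_nonneg q.1) (norm_nonneg q.2)
    rw [Prod.norm_def]
    linarith
  refine ((isLittleO_pow_pow_atTop_of_lt m.lt_succ_self).comp_tendsto htendsto).trans_isBigO ?_
  refine .of_bound (2 ^ m * 2) (.of_forall fun q => ?_)
  have hP := one_le_polyBarrier hN q.1
  have hpow := norm_pow_le_polyBarrier hN (show m + 1 ≤ 2 * m + 2 by lia) q.1
  have hadd := add_pow_le zero_le_one (norm_nonneg q.1) (m + 1)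
  rw [one_pow, add_tsub_cancel_right] at hadd
  rw [Function.comp_apply, Real.norm_of_nonneg (by positivity),
    Real.norm_of_nonneg (zero_le_one.trans hP), mul_assoc, two_mul]
  exact hadd.trans (by gcongr)

variable [DecidableEq ι] {u : (ι → ℝ) × ℝ → ι → ℝ} {q : (ι → ℝ) × ℝ}

theorem parabolicOp_coord_pow (i : ι) :
    parabolicOp ν (fun k => Pi.single k 1) u (fun p => p.1 i ^ (N + 2)) q
      = (N + 2) * q.1 i ^ (N + 1) * u q i - ν * ((N + 2) * ((N + 1) * q.1 i ^ N)) := by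
  have hfirst : (deriv fun s : ℝ => s ^ (N + 2)) = fun s => (N + 2 : ℝ) * s ^ (N + 1) := by
    ext s
    simp
  have hsecond : deriv (deriv fun s : ℝ => s ^ (N + 2)) (q.1 i)
      = (N + 2) * ((N + 1) * q.1 i ^ N) := by
    rw [hfirst, deriv_const_mul_field']
    simp
  have h := advectionDiffusion_comp_clm (ν := ν) (e := fun k => (Pi.single k 1, 0))
    (v := fun q => (u q, 1)) (q := q) (φ := (· ^ (N + 2)))
    ((ContinuousLinearMap.proj i).comp (ContinuousLinearMap.fst ℝ (ι → ℝ) ℝ)) (by fun_prop)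
  simpa [hsecond, Pi.single_apply] using h

theorem parabolicOp_polyBarrier :
    parabolicOp ν (fun k => Pi.single k 1) u (fun p => polyBarrier (N + 2) p.1) q
      = ∑ i, ((N + 2) * q.1 i ^ (N + 1) * u q i - ν * ((N + 2) * ((N + 1) * q.1 i ^ N))) := by
  simp only [polyBarrier]
  rw [parabolicOp, advectionDiffusion_add_const, advectionDiffusion_sum fun i _ => by fun_prop]
  exact Finset.sum_congr rfl fun i _ => parabolicOp_coord_pow i

theorem neg_le_parabolicOp_polyBarrier (hν : 0 ≤ ν) (hN : Even (N + 2))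
    (hu : ∀ i, |u q i| ≤ C * (1 + ‖q.1‖)) :
    -(Fintype.card ι * ((N + 2) * (2 * C) + ν * ((N + 2) * (N + 1)))) * polyBarrier (N + 2) q.1
      ≤ parabolicOp ν (fun k => Pi.single k 1) u (fun p => polyBarrier (N + 2) p.1) q := by
  set r := ‖q.1‖
  set P := polyBarrier (N + 2) q.1
  have hcoord : ∀ i, -((N + 2) * (2 * C) + ν * ((N + 2) * (N + 1))) * P
      ≤ (N + 2) * q.1 i ^ (N + 1) * u q i - ν * ((N + 2) * ((N + 1) * q.1 i ^ N)) := fun i => by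
    have hpow : ∀ j ≤ N + 2, r ^ j ≤ P := fun j hj => norm_pow_le_polyBarrier hN hj q.1
    have hxi : ∀ j, |q.1 i ^ j| ≤ r ^ j := fun j => by
      rw [abs_pow]
      exact pow_le_pow_left₀ (abs_nonneg _) (norm_le_pi_norm q.1 i) j
    have hC : 0 ≤ C := nonneg_of_mul_nonneg_left ((abs_nonneg _).trans (hu i)) (by positivity)
    have hadvection : |q.1 i ^ (N + 1) * u q i| ≤ 2 * C * P := calc
      |q.1 i ^ (N + 1) * u q i| ≤ r ^ (N + 1) * (C * (1 + r)) := by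
        rw [abs_mul]
        exact mul_le_mul (hxi _) (hu i) (abs_nonneg _) (by positivity)
      _ = C * (r ^ (N + 1) + r ^ (N + 2)) := by ring
      _ ≤ C * (P + P) := by gcongr <;> exact hpow _ (by lia)
      _ = 2 * C * P := by ring
    have hdiffusion : q.1 i ^ N ≤ P := (le_abs_self _).trans ((hxi N).trans (hpow N (by lia)))
    have hN₀ : (0 : ℝ) ≤ N + 2 := by positivity
    have h₁ := mul_le_mul_of_nonneg_left (neg_le_of_abs_le hadvection) hN₀
    have h₂ := mul_le_mul_of_nonneg_left hdiffusion
      (show (0 : ℝ) ≤ ν * ((N + 2) * (N + 1)) by positivity)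
    linarith
  have hcard := Finset.card_nsmul_le_sum Finset.univ _ _ fun i _ => hcoord i
  rw [nsmul_eq_mul, Finset.card_univ] at hcard
  rw [parabolicOp_polyBarrier]
  linarith

theorem eqOn_zero_of_isBigO_one_add_norm_pow {H : Type*} [NormedAddCommGroup H] [NormedSpace ℝ H]
    {Z : (ι → ℝ) × ℝ → H} {T K : ℝ} (hν : 0 ≤ ν) (hT : 0 < T)
    (hu : ∀ q ∈ univ ×ˢ Ioo 0 T, ∀ i, |u q i| ≤ C * (1 + ‖q.1‖))
    (hZ : ContinuousOn Z (univ ×ˢ Icc 0 T)) (hZ₂ : ∀ q ∈ univ ×ˢ Ioo 0 T, ContDiffAt ℝ 2 Z q)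
    (hgrowth : Z =O[𝓟 (univ ×ˢ Icc 0 T)] fun q => (1 + ‖q.1‖) ^ m) (hZ₀ : ∀ x, Z (x, 0) = 0)
    (hLZ : ∀ q ∈ univ ×ˢ Ioo 0 T,
      ‖parabolicOp ν (fun k => Pi.single k 1) u Z q‖ ≤ K * ‖Z q‖) :
    EqOn Z 0 (univ ×ˢ Icc 0 T) := by
  have hN : Even (2 * m + 2) := ⟨m + 1, by ring⟩
  obtain ⟨κ, hκ⟩ : ∃ κ, ∀ q ∈ univ ×ˢ Ioo 0 T, -κ * polyBarrier (2 * m + 2) q.1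
      ≤ parabolicOp ν (fun k => Pi.single k 1) u (fun p => polyBarrier (2 * m + 2) p.1) q :=
    ⟨_, fun q hq => neg_le_parabolicOp_polyBarrier hν hN (hu q hq)⟩
  have hPpos : ∀ x : ι → ℝ, 0 < polyBarrier (2 * m + 2) x :=
    fun x => zero_lt_one.trans_le (one_le_polyBarrier hN x)
  set c := |K + κ| + 1
  have hV : ContDiff ℝ 2 fun p : (ι → ℝ) × ℝ =>
      Real.exp (c * p.2) * polyBarrier (2 * m + 2) p.1 :=
    (Real.contDiff_exp.comp (by fun_prop)).mul (contDiff_polyBarrier.comp contDiff_fst)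
  refine eqOn_zero_of_lyapunov (V := fun p => Real.exp (c * p.2) * polyBarrier (2 * m + 2) p.1)
    (K := K) hν hT hZ hV.continuous.continuousOn hZ₂ (fun q _ => hV.contDiffAt)
    (fun q _ => mul_pos (Real.exp_pos _) (hPpos _)) ?_ hZ₀ hLZ fun q hq => ?_
  · refine (hgrowth.mono inf_le_right).trans_isLittleO
      ((isLittleO_one_add_norm_pow_polyBarrier m T).trans_isBigO ?_)
    refine .of_bound' ?_
    filter_upwards [mem_inf_of_right (mem_principal_self _)] with q hq
    rw [norm_mul, Real.norm_of_nonneg (Real.exp_nonneg _)]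
    exact le_mul_of_one_le_left (norm_nonneg _)
      (Real.one_le_exp (mul_nonneg (by positivity) hq.2.1))
  · rw [parabolicOp_exp_mul c contDiff_polyBarrier, mul_left_comm]
    refine mul_lt_mul_of_pos_left ?_ (Real.exp_pos _)
    have hc : K + κ < c := (le_abs_self _).trans_lt (lt_add_one _)
    have := mul_lt_mul_of_pos_right hc (hPpos q.1)
    linarith [hκ q hq]

end Barrier

section LinearGrowth

variable {ι H : Type*} [Fintype ι] [DecidableEq ι] [NormedAddCommGroup H] [NormedSpace ℝ H]
  {T K : ℝ}

theorem isBigO_one_add_norm_of_dirDeriv_bounded {F : (ι → ℝ) × ℝ → H} (hT : 0 < T)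
    (hF : ContinuousOn F (univ ×ˢ Icc 0 T))
    (hF₁ : ∀ q ∈ univ ×ˢ Ioo 0 T, DifferentiableAt ℝ F q)
    (hbdd : ∀ q ∈ univ ×ˢ Ioo 0 T, ∀ k, ‖dirDeriv (Pi.single k 1, 0) F q‖ ≤ K) :
    F =O[𝓟 (univ ×ˢ Icc 0 T)] fun q => 1 + ‖q.1‖ := by
  obtain ⟨B, hB⟩ := isCompact_Icc.exists_bound_of_continuousOn
    (hF.comp (f := fun t : ℝ => ((0 : ι → ℝ), t)) (by fun_prop) fun t ht => ⟨trivial, ht⟩)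
  obtain ⟨c, hc, hop⟩ := (Pi.basisFun ℝ ι).exists_opNorm_le (F := H)
  have hslice : ∀ q ∈ univ ×ˢ Ioo 0 T, ‖F q - F (0, q.2)‖ ≤ c * |K| * ‖q.1‖ := fun ⟨x, t⟩ hq => by
    have hderiv : ∀ y, HasFDerivAt (fun y => F (y, t)) (fderiv ℝ F (y, t) ∘L .inl ℝ (ι → ℝ) ℝ) y :=
      fun y => (hF₁ (y, t) ⟨trivial, hq.2⟩).hasFDerivAt.comp y (hasFDerivAt_prodMk_left y t)
    have hnorm : ∀ y, ‖fderiv ℝ F (y, t) ∘L .inl ℝ (ι → ℝ) ℝ‖ ≤ c * |K| := fun y =>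
      hop (abs_nonneg K) fun k => by
        simpa [dirDeriv] using (hbdd (y, t) ⟨trivial, hq.2⟩ k).trans (le_abs_self K)
    simpa using convex_univ.norm_image_sub_le_of_norm_hasFDerivWithin_le
      (fun y _ => (hderiv y).hasFDerivWithinAt) (fun y _ => hnorm y) (mem_univ 0) (mem_univ x)
  have hopen : ∀ q ∈ univ ×ˢ Ioo 0 T, ‖F q‖ ≤ (|B| + c * |K|) * (1 + ‖q.1‖) := fun q hq => calc
    ‖F q‖ ≤ ‖F (0, q.2)‖ + ‖F q - F (0, q.2)‖ := norm_le_norm_add_norm_sub' _ _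
    _ ≤ |B| + c * |K| * ‖q.1‖ := add_le_add
      ((hB q.2 (Ioo_subset_Icc_self hq.2)).trans (le_abs_self B)) (hslice q hq)
    _ ≤ (|B| + c * |K|) * (1 + ‖q.1‖) := by
      have : 0 ≤ |B| * ‖q.1‖ + c * |K| := by positivity
      linarith
  have hclosure : closure ((univ : Set (ι → ℝ)) ×ˢ Ioo 0 T) = univ ×ˢ Icc 0 T := by
    rw [closure_prod_eq, closure_univ, closure_Ioo hT.ne]
  refine .of_bound (|B| + c * |K|) (eventually_principal.2 fun q hq => ?_)
  rw [Real.norm_of_nonneg (by positivity : 0 ≤ 1 + ‖q.1‖)]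
  refine le_on_closure hopen ?_ (by fun_prop) (hclosure.symm ▸ hq)
  exact hclosure.symm ▸ hF.norm

end LinearGrowth

section Inverse

variable {ι 𝔸 : Type*} [Fintype ι] [DecidableEq ι] [NormedRing 𝔸] [NormedAlgebra ℝ 𝔸]
  {ν T : ℝ} {u : (ι → ℝ) × ℝ → ι → ℝ}

theorem mul_eq_one_of_parabolicOp {M Q U : (ι → ℝ) × ℝ → 𝔸} {C K₁ K₂ : ℝ} (hν : 0 ≤ ν) (hT : 0 < T)
    (hu : ∀ q ∈ univ ×ˢ Ioo 0 T, ∀ i, |u q i| ≤ C * (1 + ‖q.1‖))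
    (hM : ContinuousOn M (univ ×ˢ Icc 0 T)) (hM₂ : ∀ q ∈ univ ×ˢ Ioo 0 T, ContDiffAt ℝ 2 M q)
    (hQ : ContinuousOn Q (univ ×ˢ Icc 0 T)) (hQ₂ : ∀ q ∈ univ ×ˢ Ioo 0 T, ContDiffAt ℝ 2 Q q)
    (hM_bdd : ∀ q ∈ univ ×ˢ Ioo 0 T, ∀ k, ‖dirDeriv (Pi.single k 1, 0) M q‖ ≤ K₁)
    (hQ_bdd : ∀ q ∈ univ ×ˢ Ioo 0 T, ∀ k, ‖dirDeriv (Pi.single k 1, 0) Q q‖ ≤ K₂)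
    (hM_pde : ∀ q ∈ univ ×ˢ Ioo 0 T,
      parabolicOp ν (fun k => Pi.single k 1) u M q = -(M q * U q))
    (hQ_pde : ∀ q ∈ univ ×ˢ Ioo 0 T, parabolicOp ν (fun k => Pi.single k 1) u Q q
      = U q * Q q + (2 * ν) • ∑ k, Q q * dirDeriv (Pi.single k 1, 0) M q
        * dirDeriv (Pi.single k 1, 0) Q q)
    (h₀ : ∀ x, M (x, 0) * Q (x, 0) = 1) {q : (ι → ℝ) × ℝ} (hq : q ∈ univ ×ˢ Icc 0 T) :
    M q * Q q = 1 := by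
  refine sub_eq_zero.1 (eqOn_zero_of_isBigO_one_add_norm_pow
    (Z := fun p => M p * Q p - 1) (m := 2) (K := 2 * ν * (Fintype.card ι * (K₁ * K₂))) hν hT hu
    ((hM.mul hQ).sub continuousOn_const)
    (fun p hp => ((hM₂ p hp).mul (hQ₂ p hp)).sub contDiffAt_const) ?_
    (fun x => sub_eq_zero.2 (h₀ x)) (fun p hp => ?_) hq)
  · have hM_growth := isBigO_one_add_norm_of_dirDeriv_bounded hT hM
      (fun p hp => (hM₂ p hp).differentiableAt two_ne_zero) hM_bdd
    have hQ_growth := isBigO_one_add_norm_of_dirDeriv_bounded hT hQ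
      (fun p hp => (hQ₂ p hp).differentiableAt two_ne_zero) hQ_bdd
    have hone : (fun _ => (1 : 𝔸)) =O[𝓟 (univ ×ˢ Icc 0 T)]
        fun p : (ι → ℝ) × ℝ => (1 + ‖p.1‖) ^ 2 := by
      refine .of_bound ‖(1 : 𝔸)‖ (.of_forall fun p => le_mul_of_one_le_right (norm_nonneg _) ?_)
      rw [Real.norm_of_nonneg (by positivity)]
      exact one_le_pow₀ (le_add_of_nonneg_right (norm_nonneg _))
    exact ((hM_growth.mul hQ_growth).congr_right fun p => (sq _).symm).sub hone
  · rw [parabolicOp, advectionDiffusion_mul_sub_one (hM₂ p hp) (hQ₂ p hp) (hM_pde p hp)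
      (hQ_pde p hp), mul_comm _ ‖_‖]
    refine norm_mul_le_of_le le_rfl ?_
    rw [norm_smul, Real.norm_of_nonneg (by positivity)]
    gcongr
    refine (norm_sum_le _ _).trans
      ((Finset.sum_le_card_nsmul _ _ (K₁ * K₂) fun k _ => ?_).trans_eq ?_)
    · exact norm_mul_le_of_le (hM_bdd p hp k) (hQ_bdd p hp k)
    · rw [nsmul_eq_mul, Finset.card_univ]

end Inverse

section Slices

variable {E H : Type*} [NormedAddCommGroup E] [NormedSpace ℝ E] [NormedAddCommGroup H]
  [NormedSpace ℝ H] {F : E × ℝ → H} {I : Set ℝ} {q : E × ℝ}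

theorem dirDeriv_slice_eq_fderivWithin (hF : DifferentiableWithinAt ℝ F (univ ×ˢ I) q)
    (hq : q.2 ∈ I) (w : E) :
    dirDeriv w (fun y => F (y, q.2)) q.1 = fderivWithin ℝ F (univ ×ˢ I) q (w, 0) := by
  have hslice : HasFDerivWithinAt (fun y => F (y, q.2)) _ univ q.1 :=
    hF.hasFDerivWithinAt.comp q.1 (hasFDerivAt_prodMk_left q.1 q.2).hasFDerivWithinAt
      fun y _ => mk_mem_prod (mem_univ y) hq
  rw [dirDeriv, (hasFDerivWithinAt_univ.1 hslice).fderiv]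
  simp

theorem contDiffOn_dirDeriv_slice {m n : WithTop ℕ∞} (hI : UniqueDiffOn ℝ I)
    (hF : ContDiffOn ℝ n F (univ ×ˢ I)) (hmn : m + 1 ≤ n) (w : E) :
    ContDiffOn ℝ m (fun q => dirDeriv w (fun y => F (y, q.2)) q.1) (univ ×ˢ I) :=
  ((hF.fderivWithin (uniqueDiffOn_univ.prod hI) hmn).clm_apply
    (contDiffOn_const (c := (w, (0 : ℝ))))).congr fun q hq =>
      dirDeriv_slice_eq_fderivWithin
        (hF.differentiableOn (zero_lt_one.trans_le (le_add_self.trans hmn)).ne' q hq) hq.2 w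

theorem dirDeriv_slice (hF : DifferentiableAt ℝ F q) (w : E) :
    dirDeriv w (fun y => F (y, q.2)) q.1 = dirDeriv (w, 0) F q := by
  simpa [dirDeriv] using
    dirDeriv_slice_eq_fderivWithin (I := univ) hF.differentiableWithinAt trivial w

theorem deriv_slice (hF : DifferentiableAt ℝ F q) :
    deriv (fun s => F (q.1, s)) q.2 = dirDeriv (0, 1) F q := by
  have hline : HasDerivAt (fun s => (q.1, s)) (0, 1) q.2 :=
    (hasDerivAt_const q.2 q.1).prodMk (hasDerivAt_id q.2)
  exact (hF.hasFDerivAt.comp_hasDerivAt q.2 hline :).deriv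

theorem eventuallyEq_dirDeriv_slice (hF : ContDiffAt ℝ 2 F q) (w : E) :
    (fun p => dirDeriv w (fun y => F (y, p.2)) p.1) =ᶠ[𝓝 q] dirDeriv (w, 0) F :=
  (eventually_differentiableAt_of_contDiffAt hF).mono fun _ hp => dirDeriv_slice hp w

theorem dirDeriv_dirDeriv_slice (hF : ContDiffAt ℝ 2 F q) (w w' : E) :
    dirDeriv w (dirDeriv w' fun y => F (y, q.2)) q.1 = dirDeriv (w, 0) (dirDeriv (w', 0) F) q := by
  rw [← dirDeriv_slice (differentiableAt_dirDeriv hF _) w]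
  refine dirDeriv_congr ?_ w
  exact ((Continuous.prodMk_left q.2).tendsto q.1).eventually (eventuallyEq_dirDeriv_slice hF w')

theorem contDiffAt_of_contDiffOn_strip {n : WithTop ℕ∞} {T : ℝ}
    (hF : ContDiffOn ℝ n F (univ ×ˢ Icc 0 T)) (hq : q ∈ univ ×ˢ Ioo 0 T) : ContDiffAt ℝ n F q :=
  hF.contDiffAt (prod_mem_nhds univ_mem (Icc_mem_nhds hq.2.1 hq.2.2))

end Slices

section Coordinates

variable {ι : Type*} [Fintype ι] [DecidableEq ι] {ν : ℝ}

/-- The parabolic operator `Γφ = ∂φ/∂t + (u·∇)φ - νΔφ` in coordinates. -/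
def coordParabolicOp (ν : ℝ) (u : (ι → ℝ) → ℝ → ι → ℝ) (φ : (ι → ℝ) → ℝ → ℝ) (x : ι → ℝ) (t : ℝ) :
    ℝ :=
  deriv (fun s => φ x s) t + ∑ k, u x t k * dirDeriv (Pi.single k 1) (fun y => φ y t) x
    - ν * ∑ k, dirDeriv (Pi.single k 1) (dirDeriv (Pi.single k 1) fun y => φ y t) x

/-- The Jacobian matrix `(∇f)ᵢⱼ = ∂fᵢ/∂xⱼ`. -/
def jacobianMatrix (f : (ι → ℝ) → ι → ℝ) (x : ι → ℝ) : Matrix ι ι ℝ :=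
  .of fun i j => dirDeriv (Pi.single j 1) (fun y => f y i) x

/-- The entrywise partial derivative `∂ₖF` of a matrix-valued function. -/
def matrixPartialDeriv (k : ι) (F : (ι → ℝ) → Matrix ι ι ℝ) (x : ι → ℝ) : Matrix ι ι ℝ :=
  .of fun i j => dirDeriv (Pi.single k 1) (fun y => F y i j) x

theorem dirDeriv_prodMk_eq_sum {H : Type*} [NormedAddCommGroup H] [NormedSpace ℝ H]
    (F : (ι → ℝ) × ℝ → H) (q : (ι → ℝ) × ℝ) (w : ι → ℝ) :
    dirDeriv (w, 0) F q = ∑ k, w k • dirDeriv (Pi.single k 1, 0) F q := by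
  have hw : (w, (0 : ℝ)) = ∑ k, w k • (Pi.single k 1, 0) := by
    ext i
    · simp [Prod.fst_sum, Pi.single_apply]
    · simp [Prod.snd_sum]
  simp only [dirDeriv]
  rw [hw, map_sum]
  simp only [map_smul]

theorem coordParabolicOp_eq_parabolicOp {u : (ι → ℝ) → ℝ → ι → ℝ} {φ : (ι → ℝ) → ℝ → ℝ}
    {q : (ι → ℝ) × ℝ} (hφ : ContDiffAt ℝ 2 (fun p : (ι → ℝ) × ℝ => φ p.1 p.2) q) :
    coordParabolicOp ν u φ q.1 q.2 = parabolicOp ν (fun k => Pi.single k 1)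
      (fun p => u p.1 p.2) (fun p => φ p.1 p.2) q := by
  have hφ₁ := hφ.differentiableAt two_ne_zero
  have hdrift : dirDeriv (u q.1 q.2, 1) (fun p : (ι → ℝ) × ℝ => φ p.1 p.2) q
      = deriv (fun s => φ q.1 s) q.2
        + ∑ k, u q.1 q.2 k * dirDeriv (Pi.single k 1) (fun y => φ y q.2) q.1 := by
    have hsplit : (u q.1 q.2, (1 : ℝ)) = (0, 1) + (u q.1 q.2, 0) := by simp
    have hspace : ∀ k, dirDeriv (Pi.single k 1) (fun y => φ y q.2) q.1
        = dirDeriv (Pi.single k 1, 0) (fun p : (ι → ℝ) × ℝ => φ p.1 p.2) q :=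
      fun k => dirDeriv_slice hφ₁ _
    simp only [hspace, ← smul_eq_mul, ← dirDeriv_prodMk_eq_sum]
    rw [show deriv (fun s => φ q.1 s) q.2 = _ from deriv_slice hφ₁, hsplit]
    exact map_add _ _ _
  have hdiffusion : ∀ k, dirDeriv (Pi.single k 1) (dirDeriv (Pi.single k 1) fun y => φ y q.2) q.1
      = dirDeriv (Pi.single k 1, 0) (dirDeriv (Pi.single k 1, 0)
          fun p : (ι → ℝ) × ℝ => φ p.1 p.2) q :=
    fun k => dirDeriv_dirDeriv_slice hφ _ _
  simp only [coordParabolicOp, parabolicOp, advectionDiffusion, hdrift, hdiffusion, smul_eq_mul]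

theorem parabolicOp_dirDeriv_of_parabolicOp_eq_zero {u : (ι → ℝ) × ℝ → ι → ℝ}
    {f : (ι → ℝ) × ℝ → ℝ} {q : (ι → ℝ) × ℝ} (hf : ContDiffAt ℝ 3 f q)
    (hu : DifferentiableAt ℝ u q)
    (hzero : parabolicOp ν (fun k => Pi.single k 1) u f =ᶠ[𝓝 q] 0) (w : ι → ℝ) :
    parabolicOp ν (fun k => Pi.single k 1) u (dirDeriv (w, 0) f) q
      = -∑ k, dirDeriv (Pi.single k 1, 0) f q * dirDeriv (w, 0) (fun p => u p k) q := by
  have hdrift : dirDeriv (w, 0) (fun p => (u p, (1 : ℝ))) q = (dirDeriv (w, 0) u q, 0) := by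
    simp [dirDeriv, (hu.hasFDerivAt.prodMk (hasFDerivAt_const (1 : ℝ) q)).fderiv]
  have hcoord : ∀ k, dirDeriv (w, 0) u q k = dirDeriv (w, 0) (fun p => u p k) q :=
    fun k => (dirDeriv_clm_comp (.proj k) hu (w, 0)).symm
  have hcomm := dirDeriv_advectionDiffusion (ν := ν) (e := fun k => (Pi.single k 1, 0)) hf
    (hu.prodMk (differentiableAt_const (1 : ℝ))) (w, 0)
  have hleft : dirDeriv (w, 0) (parabolicOp ν (fun k => Pi.single k 1) u f) q = 0 := by
    rw [dirDeriv_congr hzero]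
    simp [dirDeriv]
  rw [hleft, hdrift, dirDeriv_prodMk_eq_sum] at hcomm
  rw [eq_neg_iff_add_eq_zero]
  simpa [hcoord, mul_comm] using hcomm.symm

end Coordinates

section MatrixValued

open scoped Matrix.Norms.Operator

variable {X ι : Type*} [NormedAddCommGroup X] [NormedSpace ℝ X] [Fintype ι] {ν : ℝ}

theorem contDiffOn_matrix {n : WithTop ℕ∞} {F : X → Matrix ι ι ℝ} {S : Set X}
    (hF : ∀ i j, ContDiffOn ℝ n (fun p => F p i j) S) : ContDiffOn ℝ n F S := by
  let L : (ι → ι → ℝ) →L[ℝ] Matrix ι ι ℝ :=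
    LinearMap.toContinuousLinearMap (Matrix.ofLinearEquiv ℝ).toLinearMap
  have hentries : ContDiffOn ℝ n (fun p i j => F p i j) S :=
    contDiffOn_pi.2 fun i => contDiffOn_pi.2 fun j => hF i j
  exact L.contDiff.comp_contDiffOn hentries

theorem dirDeriv_matrix_apply {F : X → Matrix ι ι ℝ} {q : X} (hF : DifferentiableAt ℝ F q)
    (w : X) (i j : ι) : dirDeriv w F q i j = dirDeriv w (fun p => F p i j) q :=
  (dirDeriv_clm_comp (LinearMap.toContinuousLinearMap (Matrix.entryLinearMap ℝ ℝ i j)) hF w).symm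

theorem advectionDiffusion_matrix_apply {κ : Type*} [Fintype κ] {e : κ → X} {v : X → X}
    {F : X → Matrix ι ι ℝ} {q : X} (hF : ContDiffAt ℝ 2 F q) (i j : ι) :
    advectionDiffusion ν e v F q i j = advectionDiffusion ν e v (fun p => F p i j) q :=
  (advectionDiffusion_clm_comp
    (LinearMap.toContinuousLinearMap (Matrix.entryLinearMap ℝ ℝ i j)) hF).symm

theorem norm_matrix_le_card_mul {M : Matrix ι ι ℝ} {C : ℝ} (hM : ∀ i j, |M i j| ≤ C) :
    ‖M‖ ≤ Fintype.card ι * |C| := by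
  rw [Matrix.linfty_opNorm_def, ← Real.norm_eq_abs, ← coe_nnnorm, ← NNReal.coe_natCast,
    ← NNReal.coe_mul, NNReal.coe_le_coe]
  refine Finset.sup_le fun i _ => (Finset.sum_le_card_nsmul _ _ ‖C‖₊ fun j _ => ?_).trans_eq ?_
  · exact (hM i j).trans (le_abs_self C)
  · rw [nsmul_eq_mul, Finset.card_univ]

variable [DecidableEq ι]

theorem dirDeriv_eq_matrixPartialDeriv {F : (ι → ℝ) → ℝ → Matrix ι ι ℝ} {q : (ι → ℝ) × ℝ}
    (hF : DifferentiableAt ℝ (fun p : (ι → ℝ) × ℝ => F p.1 p.2) q) (k : ι) :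
    dirDeriv (Pi.single k 1, 0) (fun p : (ι → ℝ) × ℝ => F p.1 p.2) q
      = matrixPartialDeriv k (fun y => F y q.2) q.1 := by
  ext i j
  have hentry : DifferentiableAt ℝ (fun p : (ι → ℝ) × ℝ => F p.1 p.2 i j) q :=
    (LinearMap.toContinuousLinearMap (Matrix.entryLinearMap ℝ ℝ i j)).differentiableAt.comp q hF
  rw [dirDeriv_matrix_apply hF]
  exact (dirDeriv_slice hentry _).symm

theorem norm_dirDeriv_le_card_mul {F : (ι → ℝ) → ℝ → Matrix ι ι ℝ} {q : (ι → ℝ) × ℝ} {C : ℝ}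
    {k : ι} (hF : DifferentiableAt ℝ (fun p : (ι → ℝ) × ℝ => F p.1 p.2) q)
    (hC : ∀ i j, |matrixPartialDeriv k (fun y => F y q.2) q.1 i j| ≤ C) :
    ‖dirDeriv (Pi.single k 1, 0) (fun p : (ι → ℝ) × ℝ => F p.1 p.2) q‖ ≤ Fintype.card ι * |C| := by
  rw [dirDeriv_eq_matrixPartialDeriv hF]
  exact norm_matrix_le_card_mul hC

theorem parabolicOp_eq_of_coordParabolicOp_eq {u : (ι → ℝ) → ℝ → ι → ℝ}
    {F : (ι → ℝ) → ℝ → Matrix ι ι ℝ} {R : Matrix ι ι ℝ} {q : (ι → ℝ) × ℝ}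
    (hF : ContDiffAt ℝ 2 (fun p : (ι → ℝ) × ℝ => F p.1 p.2) q)
    (h : ∀ i j, coordParabolicOp ν u (fun y s => F y s i j) q.1 q.2 = R i j) :
    parabolicOp ν (fun k => Pi.single k 1) (fun p => u p.1 p.2) (fun p => F p.1 p.2) q = R := by
  ext i j
  have hentry : ContDiffAt ℝ 2 (fun p : (ι → ℝ) × ℝ => F p.1 p.2 i j) q :=
    (LinearMap.toContinuousLinearMap (Matrix.entryLinearMap ℝ ℝ i j)).contDiff.contDiffAt.comp q hF
  rw [parabolicOp, advectionDiffusion_matrix_apply hF, ← h i j]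
  exact (coordParabolicOp_eq_parabolicOp (φ := fun y s => F y s i j) hentry).symm

theorem jacobianMatrix_id (x : ι → ℝ) : jacobianMatrix (fun y => y) x = 1 := by
  ext i j
  have hproj : HasFDerivAt (fun y : ι → ℝ => y i) (.proj i) x :=
    (ContinuousLinearMap.proj (R := ℝ) (φ := fun _ : ι => ℝ) i).hasFDerivAt
  simp [jacobianMatrix, dirDeriv, hproj.fderiv, Matrix.one_apply, Pi.single_apply]

theorem contDiffOn_jacobianMatrix {A : (ι → ℝ) → ℝ → ι → ℝ} {T : ℝ} (hT : 0 < T)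
    (hA : ContDiffOn ℝ 3 (fun p : (ι → ℝ) × ℝ => A p.1 p.2) (univ ×ˢ Icc 0 T)) :
    ContDiffOn ℝ 2 (fun p => jacobianMatrix (fun y => A y p.2) p.1) (univ ×ˢ Icc 0 T) :=
  contDiffOn_matrix fun i j =>
    contDiffOn_dirDeriv_slice (F := fun p => A p.1 p.2 i) (uniqueDiffOn_Icc hT)
      (contDiffOn_pi.1 hA i) (by norm_num) (Pi.single j 1)

theorem parabolicOp_jacobianMatrix {u A : (ι → ℝ) → ℝ → ι → ℝ} {q : (ι → ℝ) × ℝ}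
    (hu : DifferentiableAt ℝ (fun p : (ι → ℝ) × ℝ => u p.1 p.2) q)
    (hA : ContDiffAt ℝ 3 (fun p : (ι → ℝ) × ℝ => A p.1 p.2) q)
    (hM : ContDiffAt ℝ 2 (fun p : (ι → ℝ) × ℝ => jacobianMatrix (fun y => A y p.2) p.1) q)
    (hpde : ∀ᶠ p in 𝓝 q, ∀ i, coordParabolicOp ν u (fun y s => A y s i) p.1 p.2 = 0) :
    parabolicOp ν (fun k => Pi.single k 1) (fun p => u p.1 p.2)
        (fun p => jacobianMatrix (fun y => A y p.2) p.1) q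
      = -(jacobianMatrix (fun y => A y q.2) q.1 * jacobianMatrix (fun y => u y q.2) q.1) := by
  ext i j
  have hAi : ContDiffAt ℝ 3 (fun p : (ι → ℝ) × ℝ => A p.1 p.2 i) q := contDiffAt_pi.1 hA i
  have hAi₂ : ContDiffAt ℝ 2 (fun p : (ι → ℝ) × ℝ => A p.1 p.2 i) q := hAi.of_le (by norm_num)
  have hzero : parabolicOp ν (fun k => Pi.single k 1) (fun p => u p.1 p.2)
      (fun p : (ι → ℝ) × ℝ => A p.1 p.2 i) =ᶠ[𝓝 q] 0 := by
    filter_upwards [hpde, hAi₂.eventually (by simp)] with p hp hAp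
    exact (coordParabolicOp_eq_parabolicOp hAp).symm.trans (hp i)
  have hentry : (fun p : (ι → ℝ) × ℝ => jacobianMatrix (fun y => A y p.2) p.1 i j)
      =ᶠ[𝓝 q] dirDeriv (Pi.single j 1, 0) fun p => A p.1 p.2 i :=
    eventuallyEq_dirDeriv_slice hAi₂ (Pi.single j 1)
  have hA_slice : ∀ k, jacobianMatrix (fun y => A y q.2) q.1 i k
      = dirDeriv (Pi.single k 1, 0) (fun p : (ι → ℝ) × ℝ => A p.1 p.2 i) q :=
    fun k => dirDeriv_slice (hAi₂.differentiableAt two_ne_zero) _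
  have hu_slice : ∀ k, jacobianMatrix (fun y => u y q.2) q.1 k j
      = dirDeriv (Pi.single j 1, 0) (fun p : (ι → ℝ) × ℝ => u p.1 p.2 k) q :=
    fun k => dirDeriv_slice (differentiableAt_pi.1 hu k) _
  rw [parabolicOp, advectionDiffusion_matrix_apply hM, advectionDiffusion_congr hentry,
    Matrix.neg_apply, Matrix.mul_apply]
  simp only [hA_slice, hu_slice]
  exact parabolicOp_dirDeriv_of_parabolicOp_eq_zero hAi hu hzero _

end MatrixValued

section General

open scoped Matrix.Norms.Operator

theorem Q_is_inverse_of_jacobian_general {ι : Type*} [Fintype ι] [DecidableEq ι] {ν T : ℝ}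
    (hν : 0 ≤ ν) (hT : 0 < T) {u A : (ι → ℝ) → ℝ → ι → ℝ} {Q : (ι → ℝ) → ℝ → Matrix ι ι ℝ}
    (hu : ContDiffOn ℝ 1 (fun q : (ι → ℝ) × ℝ => u q.1 q.2) (univ ×ˢ Icc 0 T))
    (hu_growth : ∃ C, ∀ x, ∀ t ∈ Icc 0 T, ∀ i, |u x t i| ≤ C * (1 + ‖x‖))
    (hA : ContDiffOn ℝ 3 (fun q : (ι → ℝ) × ℝ => A q.1 q.2) (univ ×ˢ Icc 0 T))
    (hA_pde : ∀ x, ∀ t ∈ Ioo 0 T, ∀ i, coordParabolicOp ν u (fun y s => A y s i) x t = 0)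
    (hA_init : ∀ x, A x 0 = x)
    (hA_bdd : ∃ C, ∀ x, ∀ t ∈ Icc 0 T, ∀ i j k,
      |matrixPartialDeriv j (jacobianMatrix fun y => A y t) x i k| ≤ C)
    (hQ : ∀ i j, ContDiffOn ℝ 2 (fun q : (ι → ℝ) × ℝ => Q q.1 q.2 i j) (univ ×ˢ Icc 0 T))
    (hQ_bdd : ∃ C, ∀ x, ∀ t ∈ Icc 0 T, ∀ i j k,
      |matrixPartialDeriv k (fun y => Q y t) x i j| ≤ C)
    (hQ_init : ∀ x, Q x 0 = 1)
    (hQ_pde : ∀ x, ∀ t ∈ Ioo 0 T, ∀ i j, coordParabolicOp ν u (fun y s => Q y s i j) x t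
      = (jacobianMatrix (fun y => u y t) x * Q x t) i j
        + 2 * ν * ∑ k, (Q x t * matrixPartialDeriv k (jacobianMatrix fun y => A y t) x
          * matrixPartialDeriv k (fun y => Q y t) x) i j)
    (x : ι → ℝ) {t : ℝ} (ht : t ∈ Icc 0 T) : jacobianMatrix (fun y => A y t) x * Q x t = 1 := by
  obtain ⟨C, hC⟩ := hu_growth
  obtain ⟨C₁, hC₁⟩ := hA_bdd
  obtain ⟨C₂, hC₂⟩ := hQ_bdd
  have hM := contDiffOn_jacobianMatrix hT hA
  have hQ' := contDiffOn_matrix (F := fun q : (ι → ℝ) × ℝ => Q q.1 q.2) hQ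
  have hM₂ := fun q hq => contDiffAt_of_contDiffOn_strip (q := q) hM hq
  have hQ₂ := fun q hq => contDiffAt_of_contDiffOn_strip (q := q) hQ' hq
  refine mul_eq_one_of_parabolicOp (u := fun q => u q.1 q.2)
    (M := fun q => jacobianMatrix (fun y => A y q.2) q.1) (Q := fun q => Q q.1 q.2)
    (U := fun q => jacobianMatrix (fun y => u y q.2) q.1) (q := (x, t)) hν hT
    (fun q hq => hC q.1 q.2 (Ioo_subset_Icc_self hq.2))
    hM.continuousOn hM₂ hQ'.continuousOn hQ₂
    (fun q hq k => norm_dirDeriv_le_card_mul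
      (F := fun y s => jacobianMatrix (fun z => A z s) y) ((hM₂ q hq).differentiableAt two_ne_zero)
      fun i j => hC₁ q.1 q.2 (Ioo_subset_Icc_self hq.2) i k j)
    (fun q hq k => norm_dirDeriv_le_card_mul ((hQ₂ q hq).differentiableAt two_ne_zero)
      fun i j => hC₂ q.1 q.2 (Ioo_subset_Icc_self hq.2) i j k)
    (fun q hq => ?_) (fun q hq => ?_) (fun x => ?_) ⟨trivial, ht⟩
  · refine parabolicOp_jacobianMatrix
      ((contDiffAt_of_contDiffOn_strip hu hq).differentiableAt one_ne_zero)
      (contDiffAt_of_contDiffOn_strip hA hq) (hM₂ q hq) ?_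
    filter_upwards [(isOpen_univ.prod isOpen_Ioo).mem_nhds hq] with p hp
      using hA_pde p.1 p.2 hp.2
  · refine parabolicOp_eq_of_coordParabolicOp_eq (hQ₂ q hq) fun i j => ?_
    simp only [dirDeriv_eq_matrixPartialDeriv ((hQ₂ q hq).differentiableAt two_ne_zero),
      dirDeriv_eq_matrixPartialDeriv (F := fun y s => jacobianMatrix (fun z => A z s) y)
        ((hM₂ q hq).differentiableAt two_ne_zero), Matrix.add_apply, Matrix.smul_apply,
      Matrix.sum_apply, smul_eq_mul]
    exact hQ_pde q.1 q.2 hq.2 i j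
  · simp only [hA_init, hQ_init, jacobianMatrix_id, mul_one]

end General

/-- A bounded smooth solution `Q` (with bounded spatial gradient) of Constantin's
equation `ΓQ = (∇u)Q + 2ν Σₖ Q (∂ₖ∇A)(∂ₖQ)` with `Q(·,0) = I` is pointwise the
inverse of the Jacobian matrix `∇A`. -/
theorem Q_is_inverse_of_jacobian
    (ν T : ℝ) (hν : 0 < ν) (hT : 0 < T)
    (u A : (Fin 3 → ℝ) → ℝ → (Fin 3 → ℝ))
    (Q : (Fin 3 → ℝ) → ℝ → Matrix (Fin 3) (Fin 3) ℝ)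
    (hu_smooth : ContDiffOn ℝ (⊤ : ℕ∞) (fun q : (Fin 3 → ℝ) × ℝ => u q.1 q.2) (univ ×ˢ Icc 0 T))
    (hu_bdd : ∃ C : ℝ, ∀ (x : Fin 3 → ℝ), ∀ t ∈ Icc (0 : ℝ) T, ∀ i j : Fin 3,
      |u x t i| ≤ C ∧ |pd j (fun y => u y t i) x| ≤ C)
    (hA_smooth : ContDiffOn ℝ (⊤ : ℕ∞) (fun q : (Fin 3 → ℝ) × ℝ => A q.1 q.2) (univ ×ˢ Icc 0 T))
    (hA_pde : ∀ (x : Fin 3 → ℝ), ∀ t ∈ Ioo (0 : ℝ) T, ∀ i : Fin 3,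
      deriv (fun s => A x s i) t
        + (∑ k, u x t k * pd k (fun y => A y t i) x)
        - ν * lap (fun y => A y t i) x = 0)
    (hA_init : ∀ x, A x 0 = x)
    (hA2_bdd : ∃ C : ℝ, ∀ (x : Fin 3 → ℝ), ∀ t ∈ Icc (0 : ℝ) T, ∀ i j k : Fin 3,
      |pd j (fun y => pd k (fun z => A z t i) y) x| ≤ C)
    (hQ_smooth : ∀ i j : Fin 3,
      ContDiffOn ℝ (⊤ : ℕ∞) (fun q : (Fin 3 → ℝ) × ℝ => Q q.1 q.2 i j) (univ ×ˢ Icc 0 T))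
    (hQ_bdd : ∃ C : ℝ, ∀ (x : Fin 3 → ℝ), ∀ t ∈ Icc (0 : ℝ) T, ∀ i j k : Fin 3,
      |Q x t i j| ≤ C ∧ |pd k (fun y => Q y t i j) x| ≤ C)
    (hQ_init : ∀ x, Q x 0 = 1)
    (hQ_pde : ∀ (x : Fin 3 → ℝ), ∀ t ∈ Ioo (0 : ℝ) T, ∀ i j : Fin 3,
      deriv (fun s => Q x s i j) t
        + (∑ k, u x t k * pd k (fun y => Q y t i j) x)
        - ν * lap (fun y => Q y t i j) x
      = ((Matrix.of (fun i' j' => pd j' (fun y => u y t i') x) * Q x t) i j)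
        + 2 * ν * ∑ k : Fin 3,
            ((Q x t
              * Matrix.of (fun l m => pd k (fun y => pd m (fun z => A z t l) y) x)
              * Matrix.of (fun m j' => pd k (fun y => Q y t m j') x)) i j)) :
    ∀ (x : Fin 3 → ℝ), ∀ t ∈ Icc (0 : ℝ) T,
      jacMat (fun y => A y t) x * Q x t = 1 := by
  have hsmooth (n : ℕ) : (n : WithTop ℕ∞) ≤ (⊤ : ℕ∞) := WithTop.coe_le_coe.2 le_top
  have hu_growth : ∃ C, ∀ x, ∀ t ∈ Icc 0 T, ∀ i, |u x t i| ≤ C * (1 + ‖x‖) :=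
    hu_bdd.imp fun C hC x t ht i => (hC x t ht i i).1.trans <| le_mul_of_one_le_right
      ((abs_nonneg _).trans (hC x t ht i i).1) (le_add_of_nonneg_right (norm_nonneg x))
  exact fun x t ht => Q_is_inverse_of_jacobian_general hν.le hT (hu_smooth.of_le (hsmooth 1))
    hu_growth (hA_smooth.of_le (hsmooth 3)) hA_pde hA_init hA2_bdd
    (fun i j => (hQ_smooth i j).of_le (hsmooth 2))
    (hQ_bdd.imp fun _ hC x t ht i j k => (hC x t ht i j k).2) hQ_init hQ_pde x ht
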